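/- Fix m > 0 and let μ, ν : (2m, ∞) → ℝ be twice differentiable. For the diagonal metric g = diag(e^{μ(ρ)}, ρ², ρ² sin²θ, e^{ν(ρ)}) in coordinates (ρ,θ,φ,τ) on ρ > 2m, 0 < θ < π, the covariant Riemann–Christoffel curvature components satisfy: R_{1212} = ½ ρ μ′; R_{1313} = ½ ρ sin²θ μ′; R_{2323} = ρ² sin²θ (1 − e^{−μ}); R_{1414} = ½ e^{ν} ( ½(μ′ν′ − (ν′)²) − ν″ ); R_{2424} = −½ ρ e^{ν−μ} ν′. -/

import Mathlib

noncomputable section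

/-- Partial derivative of a scalar function on `ℝ⁴` in the `i`-th coordinate direction. -/
def pd (f : (Fin 4 → ℝ) → ℝ) (i : Fin 4) (x : Fin 4 → ℝ) : ℝ :=
  fderiv ℝ f x (Pi.single i 1)

/-- Christoffel symbols of the first kind,
`Γ_{αβ,γ} = ½ (∂_{q^α} g_{βγ} + ∂_{q^β} g_{αγ} - ∂_{q^γ} g_{αβ})`. -/
def Γ1 (g : (Fin 4 → ℝ) → Matrix (Fin 4) (Fin 4) ℝ) (α β γ : Fin 4) (x : Fin 4 → ℝ) : ℝ :=
  (1 / 2) * (pd (fun y => g y β γ) α x + pd (fun y => g y α γ) β x - pd (fun y => g y α β) γ x)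

/-- Covariant Riemann–Christoffel curvature components
`R_{αβδγ} = ∂_{q^δ} Γ_{βγ,α} - ∂_{q^γ} Γ_{βδ,α} + Σ_{λσ} g^{λσ} (Γ_{βδ,λ} Γ_{αγ,σ} - Γ_{βγ,λ} Γ_{αδ,σ})`. -/
def Rcov (g : (Fin 4 → ℝ) → Matrix (Fin 4) (Fin 4) ℝ) (α β δ γ : Fin 4) (x : Fin 4 → ℝ) : ℝ :=
  pd (Γ1 g β γ α) δ x - pd (Γ1 g β δ α) γ x +
    ∑ lam, ∑ sig, (g x)⁻¹ lam sig *
      (Γ1 g β δ lam x * Γ1 g α γ sig x - Γ1 g β γ lam x * Γ1 g α δ sig x)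

/-- The spherically symmetric diagonal metric
`g = diag (e^{μ(ρ)}, ρ², ρ² sin² θ, e^{ν(ρ)})` in coordinates `(ρ, θ, φ, τ) = (x 0, x 1, x 2, x 3)`. -/
def gSph (μ ν : ℝ → ℝ) (x : Fin 4 → ℝ) : Matrix (Fin 4) (Fin 4) ℝ :=
  Matrix.diagonal
    ![Real.exp (μ (x 0)), (x 0) ^ 2, (x 0) ^ 2 * Real.sin (x 1) ^ 2, Real.exp (ν (x 0))]

/-! For a diagonal metric `g = diag(h₀, …, h₃)` only the symbols `Γ_{αβ,β} = ½ ∂_α h_β`,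
`Γ_{βα,β} = ½ ∂_α h_β` and, for `α ≠ β`, `Γ_{ββ,α} = -½ ∂_α h_β` can be nonzero, and the double
sum in the curvature collapses to a single sum against `h_λ⁻¹`. Hence `R_{αβαβ}` is an explicit
expression in the first and pure second partial derivatives of the `h_λ`. In the spherical case
each `h_λ` is a function of `ρ` times a function of `θ`, so these partials are one-variable
derivatives. -/

open scoped Topology

theorem deriv_sin_mul_cos (θ : ℝ) :
    deriv (fun t => Real.sin t * Real.cos t) θ = Real.cos θ ^ 2 - Real.sin θ ^ 2 := by
  rw [deriv_fun_mul Real.differentiableAt_sin Real.differentiableAt_cos, Real.deriv_sin,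
    Real.deriv_cos]
  ring

theorem deriv_deriv_exp_comp {f : ℝ → ℝ} {a : ℝ} (hf : ∀ᶠ t in 𝓝 a, DifferentiableAt ℝ f t)
    (hf' : DifferentiableAt ℝ (deriv f) a) :
    deriv (deriv fun t => Real.exp (f t)) a =
      Real.exp (f a) * (deriv f a ^ 2 + deriv (deriv f) a) := by
  have hderiv : deriv (fun t => Real.exp (f t)) =ᶠ[𝓝 a] fun t => Real.exp (f t) * deriv f t :=
    hf.mono fun t ht => deriv_exp ht
  rw [hderiv.deriv_eq, deriv_fun_mul hf.self_of_nhds.exp hf', deriv_exp hf.self_of_nhds]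
  ring

theorem pd_const (c : ℝ) (i : Fin 4) (x : Fin 4 → ℝ) : pd (fun _ => c) i x = 0 := by
  simp [pd]

theorem pd_const_mul (c : ℝ) (f : (Fin 4 → ℝ) → ℝ) (i : Fin 4) (x : Fin 4 → ℝ) :
    pd (fun y => c * f y) i x = c * pd f i x := by
  have hsmul : fderiv ℝ (fun y => c * f y) = c • fderiv ℝ f := fderiv_const_smul_field c
  simp [pd, hsmul]

/-- Where `f` is not differentiable, both sides are the junk value `0`. -/
theorem pd_comp_apply (f : ℝ → ℝ) (j i : Fin 4) (x : Fin 4 → ℝ) :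
    pd (fun y => f (y j)) i x = if i = j then deriv f (x j) else 0 := by
  by_cases hf : DifferentiableAt ℝ f (x j)
  · have hproj : HasFDerivAt (fun y : Fin 4 → ℝ => y j) (ContinuousLinearMap.proj (R := ℝ) j) x :=
      hasFDerivAt_apply j x
    have hcomp : HasFDerivAt (fun y : Fin 4 → ℝ => f (y j)) _ x :=
      hf.hasDerivAt.comp_hasFDerivAt x hproj
    rw [pd, hcomp.fderiv]
    simp [Pi.single_apply, eq_comm]
  · have hcomp : ¬DifferentiableAt ℝ (fun y : Fin 4 → ℝ => f (y j)) x := by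
      intro h
      rw [← Function.update_eq_self j x] at h
      have hline := h.comp (x j) (hasFDerivAt_update x (x j)).differentiableAt
      exact hf (by simpa [Function.comp_def] using hline)
    simp [pd, fderiv_zero_of_not_differentiableAt hcomp, deriv_zero_of_not_differentiableAt hf]

theorem pd_comp_apply_mul_comp_apply (f k : ℝ → ℝ) (a b i : Fin 4) (x : Fin 4 → ℝ)
    (hf : DifferentiableAt ℝ f (x a)) (hk : DifferentiableAt ℝ k (x b)) :
    pd (fun y => f (y a) * k (y b)) i x =
      (if i = a then deriv f (x a) else 0) * k (x b) +
        f (x a) * (if i = b then deriv k (x b) else 0) := by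
  have hfa : DifferentiableAt ℝ (fun y : Fin 4 → ℝ => f (y a)) x :=
    hf.comp x (differentiableAt_apply a x)
  have hkb : DifferentiableAt ℝ (fun y : Fin 4 → ℝ => k (y b)) x :=
    hk.comp x (differentiableAt_apply b x)
  rw [← pd_comp_apply, ← pd_comp_apply, pd, fderiv_fun_mul hfa hkb]
  simp only [pd, add_apply, smul_apply, smul_eq_mul]
  ring

section DiagonalMetric

variable (h : (Fin 4 → ℝ) → Fin 4 → ℝ)

theorem pd_diagonal (α β i : Fin 4) (x : Fin 4 → ℝ) :
    pd (fun y => Matrix.diagonal (h y) α β) i x = if α = β then pd (h · α) i x else 0 := by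
  split_ifs with hαβ
  · subst hαβ
    simp only [Matrix.diagonal_apply_eq]
  · simp only [Matrix.diagonal_apply_ne _ hαβ, pd_const]

theorem Γ1_diagonal_right (α β : Fin 4) (x : Fin 4 → ℝ) :
    Γ1 (fun y => Matrix.diagonal (h y)) α β β x = 1 / 2 * pd (h · β) α x := by
  simp only [Γ1, pd_diagonal]
  by_cases hαβ : α = β <;> simp [hαβ]

theorem Γ1_diagonal_left (α β : Fin 4) (x : Fin 4 → ℝ) :
    Γ1 (fun y => Matrix.diagonal (h y)) β α β x = 1 / 2 * pd (h · β) α x := by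
  simp only [Γ1, pd_diagonal]
  by_cases hαβ : α = β <;> simp [hαβ, eq_comm]

theorem Γ1_diagonal_of_ne {α β : Fin 4} (hαβ : α ≠ β) (x : Fin 4 → ℝ) :
    Γ1 (fun y => Matrix.diagonal (h y)) β β α x = -(1 / 2) * pd (h · β) α x := by
  simp only [Γ1, pd_diagonal, if_true, if_neg hαβ.symm]
  ring

theorem Γ1_diagonal_of_pairwise_ne {α β γ : Fin 4} (hαβ : α ≠ β) (hαγ : α ≠ γ) (hβγ : β ≠ γ)
    (x : Fin 4 → ℝ) : Γ1 (fun y => Matrix.diagonal (h y)) α β γ x = 0 := by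
  simp only [Γ1, pd_diagonal, if_neg hαβ, if_neg hαγ, if_neg hβγ]
  ring

theorem sum_inv_diagonal_mul {n K : Type*} [Fintype n] [DecidableEq n] [Field K] {d : n → K}
    (hd : ∀ i, d i ≠ 0) (F : n → n → K) :
    ∑ i, ∑ j, (Matrix.diagonal d)⁻¹ i j * F i j = ∑ i, (d i)⁻¹ * F i i := by
  have hinv : (Matrix.diagonal d)⁻¹ = Matrix.diagonal fun i => (d i)⁻¹ := by
    apply Matrix.inv_eq_right_inv
    simp [hd]
  simp [hinv, Matrix.diagonal_apply]

theorem Rcov_diagonal {α β : Fin 4} (hαβ : α ≠ β) {x : Fin 4 → ℝ} (hx : ∀ i, h x i ≠ 0) :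
    Rcov (fun y => Matrix.diagonal (h y)) α β α β x =
      -(1 / 2) * (pd (pd (h · β) α) α x + pd (pd (h · α) β) β x) +
        1 / 4 * (h x α)⁻¹ * (pd (h · α) β x ^ 2 + pd (h · α) α x * pd (h · β) α x) +
        1 / 4 * (h x β)⁻¹ * (pd (h · β) α x ^ 2 + pd (h · α) β x * pd (h · β) β x) -
        1 / 4 * ∑ i ∈ {α, β}ᶜ, (h x i)⁻¹ * (pd (h · α) i x * pd (h · β) i x) := by
  have hββα : Γ1 (fun y => Matrix.diagonal (h y)) β β α = fun y => -(1 / 2) * pd (h · β) α y :=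
    funext (Γ1_diagonal_of_ne h hαβ)
  have hβαα : Γ1 (fun y => Matrix.diagonal (h y)) β α α = fun y => 1 / 2 * pd (h · α) β y :=
    funext (Γ1_diagonal_right h β α)
  have hcompl : ∀ i ∈ ({α, β}ᶜ : Finset (Fin 4)),
      (h x i)⁻¹ * (Γ1 (fun y => Matrix.diagonal (h y)) β α i x *
          Γ1 (fun y => Matrix.diagonal (h y)) α β i x -
        Γ1 (fun y => Matrix.diagonal (h y)) β β i x *
          Γ1 (fun y => Matrix.diagonal (h y)) α α i x) =
      -(1 / 4) * ((h x i)⁻¹ * (pd (h · α) i x * pd (h · β) i x)) := by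
    intro i hi
    simp only [Finset.mem_compl, Finset.mem_insert, Finset.mem_singleton, not_or] at hi
    obtain ⟨hiα, hiβ⟩ := hi
    rw [Γ1_diagonal_of_pairwise_ne h hαβ (Ne.symm hiα) (Ne.symm hiβ), Γ1_diagonal_of_ne h hiβ,
      Γ1_diagonal_of_ne h hiα]
    ring
  rw [Rcov, sum_inv_diagonal_mul hx, ← Finset.sum_add_sum_compl {α, β}, Finset.sum_congr rfl hcompl,
    Finset.sum_pair hαβ, ← Finset.mul_sum, hββα, hβαα, pd_const_mul, pd_const_mul]
  simp only [Γ1_diagonal_right, Γ1_diagonal_left, Γ1_diagonal_of_ne h hαβ.symm]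
  ring

end DiagonalMetric

section SphericalMetric

variable (μ ν : ℝ → ℝ)

/-- The diagonal entries of `gSph μ ν`, so that the formulas for diagonal metrics apply to it. -/
def sphCoeff (x : Fin 4 → ℝ) : Fin 4 → ℝ :=
  ![Real.exp (μ (x 0)), (x 0) ^ 2, (x 0) ^ 2 * Real.sin (x 1) ^ 2, Real.exp (ν (x 0))]

theorem gSph_eq_diagonal_sphCoeff : gSph μ ν = fun x => Matrix.diagonal (sphCoeff μ ν x) := rfl

theorem sphCoeff_ne_zero {x : Fin 4 → ℝ} (hρ : x 0 ≠ 0) (hθ : Real.sin (x 1) ≠ 0) (i : Fin 4) :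
    sphCoeff μ ν x i ≠ 0 := by
  fin_cases i <;> simp [sphCoeff, hρ, hθ]

theorem pd_sphCoeff (a i : Fin 4) (x : Fin 4 → ℝ) :
    pd (sphCoeff μ ν · a) i x =
      ![![deriv (fun t => Real.exp (μ t)) (x 0), 0, 0, 0],
        ![2 * x 0, 0, 0, 0],
        ![2 * x 0 * Real.sin (x 1) ^ 2, 2 * x 0 ^ 2 * (Real.sin (x 1) * Real.cos (x 1)), 0, 0],
        ![deriv (fun t => Real.exp (ν t)) (x 0), 0, 0, 0]] a i := by
  fin_cases a
  · refine (pd_comp_apply (fun t => Real.exp (μ t)) 0 i x).trans ?_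
    fin_cases i <;> simp
  · refine (pd_comp_apply (fun t => t ^ 2) 0 i x).trans ?_
    fin_cases i <;> simp
  · refine (pd_comp_apply_mul_comp_apply (fun t => t ^ 2) (fun t => Real.sin t ^ 2) 0 1 i x
      (by fun_prop) (by fun_prop)).trans ?_
    fin_cases i <;> simp
    ring
  · refine (pd_comp_apply (fun t => Real.exp (ν t)) 0 i x).trans ?_
    fin_cases i <;> simp

theorem pd_pd_sphCoeff (a i : Fin 4) (x : Fin 4 → ℝ) :
    pd (pd (sphCoeff μ ν · a) i) i x =
      ![![deriv (deriv fun t => Real.exp (μ t)) (x 0), 0, 0, 0],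
        ![2, 0, 0, 0],
        ![2 * Real.sin (x 1) ^ 2, 2 * x 0 ^ 2 * (Real.cos (x 1) ^ 2 - Real.sin (x 1) ^ 2), 0, 0],
        ![deriv (deriv fun t => Real.exp (ν t)) (x 0), 0, 0, 0]] a i := by
  have hexp (κ : ℝ → ℝ) : pd (fun y => deriv (fun t => Real.exp (κ t)) (y 0)) 0 x =
      deriv (deriv fun t => Real.exp (κ t)) (x 0) := by
    simpa using pd_comp_apply (deriv fun t => Real.exp (κ t)) 0 0 x
  have hρ : pd (fun y => 2 * y 0) 0 x = 2 := by
    simpa using pd_comp_apply (fun t => 2 * t) 0 0 x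
  have hρ_sin : pd (fun y => 2 * y 0 * Real.sin (y 1) ^ 2) 0 x = 2 * Real.sin (x 1) ^ 2 := by
    simpa using pd_comp_apply_mul_comp_apply (fun t => 2 * t) (fun t => Real.sin t ^ 2) 0 1 0 x
      (by fun_prop) (by fun_prop)
  have hθ_sin : pd (fun y => 2 * y 0 ^ 2 * (Real.sin (y 1) * Real.cos (y 1))) 1 x =
      2 * x 0 ^ 2 * (Real.cos (x 1) ^ 2 - Real.sin (x 1) ^ 2) := by
    rw [← deriv_sin_mul_cos]
    simpa using pd_comp_apply_mul_comp_apply (fun t => 2 * t ^ 2)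
      (fun t => Real.sin t * Real.cos t) 0 1 1 x (by fun_prop) (by fun_prop)
  rw [funext (pd_sphCoeff μ ν a i)]
  fin_cases a <;> fin_cases i <;> simp [pd_const, hexp, hρ, hρ_sin, hθ_sin]

variable {μ ν} {x : Fin 4 → ℝ}

theorem Rcov_gSph_0101 (hρ : x 0 ≠ 0) (hθ : Real.sin (x 1) ≠ 0)
    (hμ : DifferentiableAt ℝ μ (x 0)) :
    Rcov (gSph μ ν) 0 1 0 1 x = (1 / 2) * (x 0) * deriv μ (x 0) := by
  rw [gSph_eq_diagonal_sphCoeff, Rcov_diagonal _ (by decide) (sphCoeff_ne_zero μ ν hρ hθ),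
    show ({0, 1}ᶜ : Finset (Fin 4)) = {2, 3} by decide, Finset.sum_pair (by decide)]
  simp only [pd_sphCoeff, pd_pd_sphCoeff, deriv_exp hμ]
  simp only [sphCoeff, Matrix.cons_val]
  field_simp
  ring

theorem Rcov_gSph_0202 (hρ : x 0 ≠ 0) (hθ : Real.sin (x 1) ≠ 0)
    (hμ : DifferentiableAt ℝ μ (x 0)) :
    Rcov (gSph μ ν) 0 2 0 2 x = (1 / 2) * (x 0) * Real.sin (x 1) ^ 2 * deriv μ (x 0) := by
  rw [gSph_eq_diagonal_sphCoeff, Rcov_diagonal _ (by decide) (sphCoeff_ne_zero μ ν hρ hθ),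
    show ({0, 2}ᶜ : Finset (Fin 4)) = {1, 3} by decide, Finset.sum_pair (by decide)]
  simp only [pd_sphCoeff, pd_pd_sphCoeff, deriv_exp hμ]
  simp only [sphCoeff, Matrix.cons_val]
  field_simp
  ring

theorem Rcov_gSph_1212 (hρ : x 0 ≠ 0) (hθ : Real.sin (x 1) ≠ 0) :
    Rcov (gSph μ ν) 1 2 1 2 x =
      (x 0) ^ 2 * Real.sin (x 1) ^ 2 * (1 - Real.exp (-μ (x 0))) := by
  rw [gSph_eq_diagonal_sphCoeff, Rcov_diagonal _ (by decide) (sphCoeff_ne_zero μ ν hρ hθ),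
    show ({1, 2}ᶜ : Finset (Fin 4)) = {0, 3} by decide, Finset.sum_pair (by decide), Real.exp_neg]
  simp only [pd_sphCoeff, pd_pd_sphCoeff]
  simp only [sphCoeff, Matrix.cons_val]
  field_simp
  ring

theorem Rcov_gSph_0303 (hρ : x 0 ≠ 0) (hθ : Real.sin (x 1) ≠ 0)
    (hμ : DifferentiableAt ℝ μ (x 0)) (hν : ∀ᶠ t in 𝓝 (x 0), DifferentiableAt ℝ ν t)
    (hν' : DifferentiableAt ℝ (deriv ν) (x 0)) :
    Rcov (gSph μ ν) 0 3 0 3 x =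
      (1 / 2) * Real.exp (ν (x 0)) *
        ((1 / 2) * (deriv μ (x 0) * deriv ν (x 0) - (deriv ν (x 0)) ^ 2) -
          deriv (deriv ν) (x 0)) := by
  rw [gSph_eq_diagonal_sphCoeff, Rcov_diagonal _ (by decide) (sphCoeff_ne_zero μ ν hρ hθ),
    show ({0, 3}ᶜ : Finset (Fin 4)) = {1, 2} by decide, Finset.sum_pair (by decide)]
  simp only [pd_sphCoeff, pd_pd_sphCoeff, deriv_exp hμ, deriv_exp hν.self_of_nhds,
    deriv_deriv_exp_comp hν hν']
  simp only [sphCoeff, Matrix.cons_val]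
  field_simp
  ring

theorem Rcov_gSph_1313 (hρ : x 0 ≠ 0) (hθ : Real.sin (x 1) ≠ 0)
    (hν : DifferentiableAt ℝ ν (x 0)) :
    Rcov (gSph μ ν) 1 3 1 3 x =
      -((1 / 2) * (x 0) * Real.exp (ν (x 0) - μ (x 0)) * deriv ν (x 0)) := by
  rw [gSph_eq_diagonal_sphCoeff, Rcov_diagonal _ (by decide) (sphCoeff_ne_zero μ ν hρ hθ),
    show ({1, 3}ᶜ : Finset (Fin 4)) = {0, 2} by decide, Finset.sum_pair (by decide), Real.exp_sub]
  simp only [pd_sphCoeff, pd_pd_sphCoeff, deriv_exp hν]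
  simp only [sphCoeff, Matrix.cons_val]
  field_simp
  ring

theorem riemann_components_spherical_general (hρ : x 0 ≠ 0) (hθ : Real.sin (x 1) ≠ 0)
    (hμ : DifferentiableAt ℝ μ (x 0)) (hν : ∀ᶠ t in 𝓝 (x 0), DifferentiableAt ℝ ν t)
    (hν' : DifferentiableAt ℝ (deriv ν) (x 0)) :
    Rcov (gSph μ ν) 0 1 0 1 x = (1 / 2) * (x 0) * deriv μ (x 0) ∧
    Rcov (gSph μ ν) 0 2 0 2 x = (1 / 2) * (x 0) * Real.sin (x 1) ^ 2 * deriv μ (x 0) ∧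
    Rcov (gSph μ ν) 1 2 1 2 x =
      (x 0) ^ 2 * Real.sin (x 1) ^ 2 * (1 - Real.exp (-μ (x 0))) ∧
    Rcov (gSph μ ν) 0 3 0 3 x =
      (1 / 2) * Real.exp (ν (x 0)) *
        ((1 / 2) * (deriv μ (x 0) * deriv ν (x 0) - (deriv ν (x 0)) ^ 2) -
          deriv (deriv ν) (x 0)) ∧
    Rcov (gSph μ ν) 1 3 1 3 x =
      -((1 / 2) * (x 0) * Real.exp (ν (x 0) - μ (x 0)) * deriv ν (x 0)) :=
  ⟨Rcov_gSph_0101 hρ hθ hμ, Rcov_gSph_0202 hρ hθ hμ, Rcov_gSph_1212 hρ hθ,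
    Rcov_gSph_0303 hρ hθ hμ hν hν', Rcov_gSph_1313 hρ hθ hν.self_of_nhds⟩

end SphericalMetric

/-- for the metric `diag (e^{μ(ρ)}, ρ², ρ² sin² θ, e^{ν(ρ)})` on `ρ > 2m`,
`0 < θ < π` with `μ, ν` twice differentiable, the covariant Riemann–Christoffel curvature
components satisfy `R₁₂₁₂ = ½ ρ μ'`, `R₁₃₁₃ = ½ ρ sin² θ μ'`,
`R₂₃₂₃ = ρ² sin² θ (1 - e^{-μ})`, `R₁₄₁₄ = ½ e^ν (½ (μ' ν' - ν'²) - ν'')`,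
`R₂₄₂₄ = -½ ρ e^{ν - μ} ν'`.  (Indices here are 0-based.) -/
theorem riemann_components_spherical (m : ℝ) (hm : 0 < m) (μ ν : ℝ → ℝ)
    (hμ : DifferentiableOn ℝ μ (Set.Ioi (2 * m)))
    (hμ' : DifferentiableOn ℝ (deriv μ) (Set.Ioi (2 * m)))
    (hν : DifferentiableOn ℝ ν (Set.Ioi (2 * m)))
    (hν' : DifferentiableOn ℝ (deriv ν) (Set.Ioi (2 * m))) :
    ∀ x : Fin 4 → ℝ, 2 * m < x 0 → 0 < x 1 → x 1 < Real.pi →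
      Rcov (gSph μ ν) 0 1 0 1 x = (1 / 2) * (x 0) * deriv μ (x 0) ∧
      Rcov (gSph μ ν) 0 2 0 2 x = (1 / 2) * (x 0) * Real.sin (x 1) ^ 2 * deriv μ (x 0) ∧
      Rcov (gSph μ ν) 1 2 1 2 x =
        (x 0) ^ 2 * Real.sin (x 1) ^ 2 * (1 - Real.exp (-μ (x 0))) ∧
      Rcov (gSph μ ν) 0 3 0 3 x =
        (1 / 2) * Real.exp (ν (x 0)) *
          ((1 / 2) * (deriv μ (x 0) * deriv ν (x 0) - (deriv ν (x 0)) ^ 2) -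
            deriv (deriv ν) (x 0)) ∧
      Rcov (gSph μ ν) 1 3 1 3 x =
        -((1 / 2) * (x 0) * Real.exp (ν (x 0) - μ (x 0)) * deriv ν (x 0)) := by
  intro x hx hθ₀ hθπ
  have hnhds : Set.Ioi (2 * m) ∈ 𝓝 (x 0) := Ioi_mem_nhds hx
  exact riemann_components_spherical_general (by linarith)
    (Real.sin_pos_of_pos_of_lt_pi hθ₀ hθπ).ne' (hμ.differentiableAt hnhds)
    (hν.eventually_differentiableAt hnhds) (hν'.differentiableAt hnhds)

end
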